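/- Let a be a nonempty list of even nonzero integers and suppose a list b parses with respect to a with n tiles (n ≥ 1), i.e. with data (n, (ε_1,…,ε_n), (c_1,…,c_{n−1})). Then d([b]) ≥ n·d([a]) − (n − 1). -/

import Mathlib

/-!
The proof reads the depth as a distance in the Farey graph, whose vertices are the primitive integer
vectors up to sign (`(p, q)` standing for `p/q`, and `(1, 0)` for `∞`), two of them being adjacent
when their determinant is `±1`. The distance from `∞` to `x` is `d(x) + 1` (`DepthRel.walk`,
`FareyWalk.depth_lt`).

Let `Mₗ` be the product of the matrices `!![0, 1; 1, x]` over the entries `x` of a list `l`; its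
second column represents `[l]`. If `bₙ` consists of the first `n` tiles and `wₙ = [bₙ]`, then the
unimodular matrix of `bₙ ⧺ (2cₙ)` carries the pair `(∞, [tile])` to `(wₙ, wₙ₊₁)`. Since reversing
the list and changing its sign act on such pairs by unimodular maps as well (`tile_walk`), the
distance from `wₙ` to `wₙ₊₁` is at least `D = d([a]) + 1`.

A Farey edge separates the graph (`FareyWalk.cross`), and some edge at `wₙ` separates `∞` from
`wₙ₊₁`. A walk from `∞` to `wₙ₊₁` therefore comes within distance `1` of `wₙ`, and a detour through
`wₙ` costs at most `2` more steps (`FareyWalk.split`). Hence the distance from `∞` to `wₙ` is at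
least `n (D - 2) + 2` by induction (`walk_bound`), which is the claim.

That the edge separates, and that no division by zero occurs in `cfVal b`, follows from sign and
size estimates on numerators and denominators (`Admits`, `Reduced`). They survive a connector `0`
because the entries on its two sides are then equal.
-/

/-- The continued fraction value `[a₁, …, aₙ] = 1/(a₁ + 1/(a₂ + ⋯ + 1/aₙ))` of a
list of integers, defined recursively with `[] = 0`, using the total division of `ℚ`. -/
def cfVal : List ℤ → ℚ
  | [] => 0
  | a :: l => 1 / ((a : ℚ) + cfVal l)

/-- `u` and `v` are the two Farey parents of `x`: there are integers `a, b, c, d` with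
`1 ≤ b, d`, `b + d = q`, `a + c = p`, `a·d − b·c = ±1`, `u = a/b` and `v = c/d`,
where `x = p/q` in lowest terms. -/
def IsFareyParents (x u v : ℚ) : Prop :=
  ∃ a b c d : ℤ, 1 ≤ b ∧ 1 ≤ d ∧ b + d = (x.den : ℤ) ∧ a + c = x.num ∧
    (a * d - b * c = 1 ∨ a * d - b * c = -1) ∧
    u = (a : ℚ) / (b : ℚ) ∧ v = (c : ℚ) / (d : ℚ)

/-- The graph of the depth function on `ℚ`: integers have depth `0`, and otherwise
`d(x) = 1 + min(d(u), d(v))` where `u, v` are the two Farey parents of `x`. -/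
inductive DepthRel : ℚ → ℕ → Prop
  | int (x : ℚ) (h : x.den = 1) : DepthRel x 0
  | step (x u v : ℚ) (m k : ℕ) (h : x.den ≠ 1) (hp : IsFareyParents x u v)
      (hu : DepthRel u m) (hv : DepthRel v k) : DepthRel x (1 + min m k)

/-- The depth `d(x)` of a rational number. -/
noncomputable def fareyDepth (x : ℚ) : ℕ := sInf {n | DepthRel x n}

/-- The `i`-th tile (1-indexed) in a parsing with respect to `a`: `εᵢ·a` if `i` is odd
and `εᵢ·rev(a)` if `i` is even, where `ε·a` is entrywise multiplication. -/
def parseTile (a : List ℤ) (ε : ℕ → ℤ) (i : ℕ) : List ℤ :=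
  (if i % 2 = 1 then a else a.reverse).map (fun x => ε i * x)

/-- The list `ε₁·a ⧺ (2c₁) ⧺ ε₂·rev(a) ⧺ (2c₂) ⧺ ⋯ ⧺ εₙ·a⁽ⁿ⁾` built from `n` tiles
separated by the connectors `(2c₁), …, (2c_{n−1})`. -/
def parseBuild (a : List ℤ) (ε c : ℕ → ℤ) : ℕ → List ℤ
  | 0 => []
  | n + 1 =>
    if n = 0 then parseTile a ε 1
    else parseBuild a ε c n ++ (2 * c n) :: parseTile a ε (n + 1)

/-- `b` parses with respect to `a` with data `(n, (ε₁,…,εₙ), (c₁,…,c_{n−1}))`: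
`b = ε₁·a ⧺ (2c₁) ⧺ ε₂·rev(a) ⧺ (2c₂) ⧺ ⋯ ⧺ εₙ·a⁽ⁿ⁾`, where each `εᵢ ∈ {1, −1}`,
each `cᵢ` is an integer, and `cᵢ = 0` implies `εᵢ = ε_{i+1}`. -/
def ParsesWith (a b : List ℤ) (n : ℕ) (ε c : ℕ → ℤ) : Prop :=
  1 ≤ n ∧
  (∀ i, 1 ≤ i → i ≤ n → ε i = 1 ∨ ε i = -1) ∧
  (∀ i, 1 ≤ i → i ≤ n - 1 → c i = 0 → ε i = ε (i + 1)) ∧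
  b = parseBuild a ε c n

/-! ### Walks in the Farey graph -/

/-- Walks of length `k` in the Farey graph. Vertices are integer vectors, regarded up to sign, and
an edge joins two vectors of determinant `±1`. -/
inductive FareyWalk : ℕ → ℤ × ℤ → ℤ × ℤ → Prop
  | nil (u v : ℤ × ℤ) (h : v = u ∨ v = -u) : FareyWalk 0 u v
  | cons (k : ℕ) (u w v : ℤ × ℤ) (h : u.1 * w.2 - u.2 * w.1 = 1 ∨ u.1 * w.2 - u.2 * w.1 = -1)
      (hw : FareyWalk k w v) : FareyWalk (k + 1) u v

namespace FareyWalk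

lemma neg_left {k : ℕ} {u v : ℤ × ℤ} (h : FareyWalk k u v) : FareyWalk k (-u) v := by
  cases h with
  | nil _ _ h =>
    refine .nil _ _ ?_
    rcases h with h | h
    · right; simp [h]
    · left; exact h
  | cons k _ w _ h hw =>
    refine .cons k _ w _ ?_ hw
    simp only [Prod.fst_neg, Prod.snd_neg]
    rcases h with h | h
    · right; linarith
    · left; linarith

lemma snoc {k : ℕ} {u v w : ℤ × ℤ} (h : FareyWalk k u v)
    (hw : v.1 * w.2 - v.2 * w.1 = 1 ∨ v.1 * w.2 - v.2 * w.1 = -1) : FareyWalk (k + 1) u w := by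
  induction h with
  | nil u v h =>
    refine .cons 0 _ w _ ?_ (.nil _ _ (Or.inl rfl))
    rcases h with rfl | rfl
    · exact hw
    · simp only [Prod.fst_neg, Prod.snd_neg] at hw
      rcases hw with hw | hw
      · right; linarith
      · left; linarith
  | cons k u x v h _ ih => exact .cons _ _ x _ h (ih hw)

lemma symm {k : ℕ} {u v : ℤ × ℤ} (h : FareyWalk k u v) : FareyWalk k v u := by
  induction h with
  | nil u v h =>
    refine .nil _ _ ?_
    rcases h with rfl | rfl
    · left; rfl
    · right; simp
  | cons k u x v h _ ih =>
    refine ih.snoc ?_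
    rcases h with h | h
    · right; linarith
    · left; linarith

lemma neg_right {k : ℕ} {u v : ℤ × ℤ} (h : FareyWalk k u v) : FareyWalk k u (-v) :=
  h.symm.neg_left.symm

/-- Unimodular integer matrices act on walks. -/
lemma map {k : ℕ} {u v : ℤ × ℤ} (h : FareyWalk k u v) (A B C E : ℤ)
    (hd : A * E - B * C = 1 ∨ A * E - B * C = -1) :
    FareyWalk k (A * u.1 + B * u.2, C * u.1 + E * u.2) (A * v.1 + B * v.2, C * v.1 + E * v.2) := by
  induction h with
  | nil u v h =>
    refine .nil _ _ ?_
    rcases h with rfl | rfl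
    · left; rfl
    · right
      ext <;> simp <;> ring
  | cons k u x v h _ ih =>
    refine .cons k _ _ _ ?_ ih
    have e : (A * u.1 + B * u.2) * (C * x.1 + E * x.2) - (C * u.1 + E * u.2) * (A * x.1 + B * x.2)
        = (A * E - B * C) * (u.1 * x.2 - u.2 * x.1) := by ring
    simp only [e]
    rcases hd with hd | hd <;> rcases h with h | h <;> rw [hd, h] <;> norm_num

/-- The version of `FareyWalk.map` with prescribed images of the endpoints up to sign. -/
lemma map' {k : ℕ} {u v u' v' : ℤ × ℤ} (h : FareyWalk k u v) (A B C E : ℤ)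
    (hd : A * E - B * C = 1 ∨ A * E - B * C = -1)
    (hu : u' = (A * u.1 + B * u.2, C * u.1 + E * u.2) ∨
      u' = -(A * u.1 + B * u.2, C * u.1 + E * u.2))
    (hv : v' = (A * v.1 + B * v.2, C * v.1 + E * v.2) ∨
      v' = -(A * v.1 + B * v.2, C * v.1 + E * v.2)) : FareyWalk k u' v' := by
  have := h.map A B C E hd
  rcases hu with rfl | rfl <;> rcases hv with rfl | rfl
  · exact this
  · exact this.neg_right
  · exact this.neg_left
  · exact this.neg_left.neg_right

/-- The edge from `(1, 0)` to `(0, 1)` separates the vectors whose coordinates have equal signs from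
those whose coordinates have opposite signs: a walk between them visits an end of the edge. -/
lemma cross {k : ℕ} {u v : ℤ × ℤ} (h : FareyWalk k u v) (σ : ℤ)
    (hu : σ * (u.1 * u.2) < 0) (hv : 0 < σ * (v.1 * v.2)) :
    ∃ k₁ k₂, k₁ + k₂ = k ∧ ((FareyWalk k₁ u (1, 0) ∧ FareyWalk k₂ (1, 0) v) ∨
      (FareyWalk k₁ u (0, 1) ∧ FareyWalk k₂ (0, 1) v)) := by
  induction h with
  | nil u v h =>
    exfalso
    rcases h with rfl | rfl
    · linarith
    · simp only [Prod.fst_neg, Prod.snd_neg, neg_mul_neg] at hv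
      linarith
  | cons k u w v h hw ih =>
    rcases lt_trichotomy (σ * (w.1 * w.2)) 0 with h0 | h0 | h0
    · obtain ⟨k₁, k₂, hk, h1⟩ := ih h0 hv
      refine ⟨k₁ + 1, k₂, by omega, ?_⟩
      rcases h1 with ⟨h1, h2⟩ | ⟨h1, h2⟩
      · exact Or.inl ⟨.cons _ _ _ _ h h1, h2⟩
      · exact Or.inr ⟨.cons _ _ _ _ h h1, h2⟩
    · have hσ : σ ≠ 0 := by rintro rfl; simp at hu
      have h1 : w.1 = 0 ∨ w.2 = 0 := by simpa [hσ] using h0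
      have key : w = (1, 0) ∨ w = -(1, 0) ∨ w = (0, 1) ∨ w = -(0, 1) := by
        rcases h1 with h1 | h1
        · have h3 : IsUnit w.2 := by
            rw [h1] at h
            rcases h with h | h
            · exact IsUnit.of_mul_eq_one u.1 (by linarith)
            · exact IsUnit.of_mul_eq_one (-u.1) (by linarith)
          rcases Int.isUnit_iff.1 h3 with h3 | h3
          · right; right; left; ext <;> simp [h1, h3]
          · right; right; right; ext <;> simp [h1, h3]
        · have h3 : IsUnit w.1 := by
            rw [h1] at h
            rcases h with h | h
            · exact IsUnit.of_mul_eq_one (-u.2) (by linarith)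
            · exact IsUnit.of_mul_eq_one u.2 (by linarith)
          rcases Int.isUnit_iff.1 h3 with h3 | h3
          · left; ext <;> simp [h1, h3]
          · right; left; ext <;> simp [h1, h3]
      have hu1 : FareyWalk 1 u w := .cons 0 _ w _ h (.nil _ _ (Or.inl rfl))
      refine ⟨1, k, by omega, ?_⟩
      rcases key with rfl | rfl | rfl | rfl
      · exact Or.inl ⟨hu1, hw⟩
      · exact Or.inl ⟨by simpa using hu1.neg_right, by simpa using hw.neg_left⟩
      · exact Or.inr ⟨hu1, hw⟩
      · exact Or.inr ⟨by simpa using hu1.neg_right, by simpa using hw.neg_left⟩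
    · exfalso
      have h1 : (u.1 * w.2) * (u.2 * w.1) < 0 := by
        by_contra hc
        have h2 : σ * (u.1 * u.2) * (σ * (w.1 * w.2)) < 0 := mul_neg_of_neg_of_pos hu h0
        nlinarith [mul_nonneg (sq_nonneg σ) (not_lt.1 hc)]
      -- two consecutive integers cannot have a negative product
      generalize u.1 * w.2 = X at *
      generalize u.2 * w.1 = Y at *
      rcases h with h | h
      · obtain rfl : X = Y + 1 := by linarith
        rcases le_or_gt 0 Y with hy | hy <;> nlinarith
      · obtain rfl : Y = X + 1 := by linarith
        rcases le_or_gt 0 X with hy | hy <;> nlinarith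

/-- If the edge from `(0, 1)` to `(1, t)` separates `u` from `v`, then a walk from `u` to `v` can be
led through `(0, 1)` at the cost of at most two more steps. -/
lemma split {k : ℕ} {u v : ℤ × ℤ} (h : FareyWalk k u v) (σ t : ℤ)
    (hu : σ * (u.1 * (u.2 - t * u.1)) < 0) (hv : 0 < σ * (v.1 * (v.2 - t * v.1))) :
    ∃ k₁ k₂, k₁ + k₂ ≤ k + 2 ∧ FareyWalk k₁ u (0, 1) ∧ FareyWalk k₂ (0, 1) v := by
  have h1 := h.map 1 0 (-t) 1 (by simp)
  obtain ⟨k₁, k₂, hk, h2⟩ := h1.cross σ (by convert hu using 3 <;> ring)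
    (by convert hv using 3 <;> ring)
  have back : ∀ {j : ℕ} {x y : ℤ × ℤ}, FareyWalk j x y →
      FareyWalk j (x.1, t * x.1 + x.2) (y.1, t * y.1 + y.2) := by
    intro j x y hxy
    simpa using hxy.map 1 0 t 1 (by simp)
  have e : ∀ x : ℤ × ℤ, (1 * x.1 + 0 * x.2, t * (1 * x.1 + 0 * x.2) + (-t * x.1 + 1 * x.2)) = x := by
    intro x
    ext <;> simp
  rcases h2 with ⟨h2, h3⟩ | ⟨h2, h3⟩
  · have h2 := back h2
    have h3 := back h3
    simp only [e] at h2 h3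
    exact ⟨k₁ + 1, k₂ + 1, by omega, h2.snoc (by simp), .cons _ _ _ _ (by simp) h3⟩
  · have h2 := back h2
    have h3 := back h3
    simp only [e] at h2 h3
    exact ⟨k₁, k₂, by omega, by simpa using h2, by simpa using h3⟩

end FareyWalk

/-! ### Depth as a distance in the Farey graph -/

lemma num_den_of_isCoprime {a b : ℤ} (hb : 0 < b) (h : IsCoprime a b) :
    ((a : ℚ) / b).num = a ∧ (((a : ℚ) / b).den : ℤ) = b := by
  have h' := Int.isCoprime_iff_gcd_eq_one.1 h
  exact ⟨Rat.num_div_eq_of_coprime hb h', Rat.den_div_eq_of_coprime hb h'⟩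

lemma isCoprime_of_det {a b c d : ℤ} (h : a * d - b * c = 1 ∨ a * d - b * c = -1) :
    IsCoprime a b := by
  rcases h with h | h
  · exact ⟨d, -c, by linarith⟩
  · exact ⟨-d, c, by linarith⟩

lemma exists_isFareyParents (x : ℚ) (hx : x.den ≠ 1) :
    ∃ u v, IsFareyParents x u v ∧ u.den < x.den ∧ v.den < x.den := by
  have hq : (2 : ℤ) ≤ (x.den : ℤ) := by have := x.den_pos; omega
  obtain ⟨s, r, h⟩ : IsCoprime x.num (x.den : ℤ) :=
    Int.isCoprime_iff_gcd_eq_one.2 (by simpa [Int.gcd] using x.reduced)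
  -- the denominator `b` of one parent is the inverse of the numerator modulo the denominator
  obtain ⟨q, hqd⟩ : ∃ q : ℤ, q = x.den := ⟨_, rfl⟩
  obtain ⟨p, hp⟩ : ∃ p : ℤ, p = x.num := ⟨_, rfl⟩
  rw [← hqd] at hq h
  rw [← hp] at h
  obtain ⟨b, m, rfl, h0, h1⟩ : ∃ b m : ℤ, s = b + q * m ∧ 0 ≤ b ∧ b < q :=
    ⟨s % q, s / q, (Int.emod_add_mul_ediv s q).symm, Int.emod_nonneg _ (by omega),
      Int.emod_lt_of_pos _ (by omega)⟩
  have hb : b ≠ 0 := by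
    rintro rfl
    have : q ∣ 1 := ⟨m * p + r, by rw [← h]; ring⟩
    have := Int.le_of_dvd one_pos this
    omega
  have hdet : -(m * p + r) * (q - b) - b * (p - -(m * p + r)) = -1 := by
    linear_combination -h
  have hdet' : (p - -(m * p + r)) * b - (q - b) * -(m * p + r) = 1 := by
    linear_combination h
  have e1 := num_den_of_isCoprime (by omega : 0 < b) (isCoprime_of_det (Or.inr hdet))
  have e2 := num_den_of_isCoprime (by omega : 0 < q - b) (isCoprime_of_det (Or.inl hdet'))
  refine ⟨_, _, ⟨-(m * p + r), b, p - -(m * p + r), q - b, by omega, by omega, by omega, by omega,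
    Or.inr hdet, rfl, rfl⟩, ?_, ?_⟩
  · have := e1.2; omega
  · have := e2.2; omega

lemma exists_depthRel (x : ℚ) : ∃ n, DepthRel x n := by
  induction hn : x.den using Nat.strong_induction_on generalizing x with
  | _ N ih =>
    subst hn
    by_cases hx : x.den = 1
    · exact ⟨0, .int x hx⟩
    · obtain ⟨u, v, h, hu, hv⟩ := exists_isFareyParents x hx
      obtain ⟨m, hm⟩ := ih _ hu u rfl
      obtain ⟨k, hk⟩ := ih _ hv v rfl
      exact ⟨_, .step x u v m k hx h hm hk⟩

lemma depthRel_fareyDepth (x : ℚ) : DepthRel x (fareyDepth x) :=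
  Nat.sInf_mem (exists_depthRel x)

lemma fareyDepth_le {x : ℚ} {n : ℕ} (h : DepthRel x n) : fareyDepth x ≤ n := Nat.sInf_le h

lemma fareyDepth_of_den_eq_one {x : ℚ} (h : x.den = 1) : fareyDepth x = 0 :=
  Nat.le_zero.1 (fareyDepth_le (.int x h))

/-- The Farey parents are unique up to order. -/
lemma fareyParents_unique {a b c d a' b' c' d' : ℤ} (hb : 1 ≤ b) (hd : 1 ≤ d)
    (hb' : 1 ≤ b') (hd' : 1 ≤ d') (hden : b + d = b' + d') (hnum : a + c = a' + c')
    (h : a * d - b * c = 1 ∨ a * d - b * c = -1)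
    (h' : a' * d' - b' * c' = 1 ∨ a' * d' - b' * c' = -1) :
    (a = a' ∧ b = b') ∨ (a = c' ∧ b = d') := by
  obtain ⟨q, hq⟩ : ∃ q, q = b + d := ⟨_, rfl⟩
  obtain ⟨p, hp⟩ : ∃ p, p = a + c := ⟨_, rfl⟩
  obtain rfl : d = q - b := by linarith
  obtain rfl : c = p - a := by linarith
  obtain rfl : d' = q - b' := by linarith
  obtain rfl : c' = p - a' := by linarith
  have hcop : IsCoprime q p := by
    rcases h with h | h
    · exact ⟨a, -b, by linear_combination h⟩
    · exact ⟨-a, b, by linear_combination -h⟩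
  have same : (a - a') * q = (b - b') * p → a = a' ∧ b = b' := by
    intro e
    have h1 : q ∣ b - b' := hcop.dvd_of_dvd_mul_right ⟨a - a', by linarith⟩
    have h2 : b - b' = 0 := Int.eq_zero_of_abs_lt_dvd h1 (abs_lt.2 ⟨by linarith, by linarith⟩)
    rw [h2, zero_mul, mul_eq_zero] at e
    exact ⟨by rcases e with e | e <;> linarith, by linarith⟩
  have opp : (a + a') * q = (b + b') * p → a = p - a' ∧ b = q - b' := by
    intro e
    have h1 : q ∣ b + b' - q :=
      dvd_sub_self_right.2 (hcop.dvd_of_dvd_mul_right ⟨a + a', by linarith⟩)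
    have h2 : b + b' - q = 0 := Int.eq_zero_of_abs_lt_dvd h1 (abs_lt.2 ⟨by linarith, by linarith⟩)
    have h3 : (a + a' - p) * q = 0 := by linear_combination e + p * h2
    rw [mul_eq_zero] at h3
    exact ⟨by rcases h3 with h3 | h3 <;> linarith, by linarith⟩
  rcases h with h | h <;> rcases h' with h' | h'
  · exact Or.inl (same (by linear_combination -h' + h))
  · exact Or.inr (opp (by linear_combination h + h'))
  · exact Or.inr (opp (by linear_combination h + h'))
  · exact Or.inl (same (by linear_combination -h' + h))

/-- The recursion for the depth, with the parents given by any representation as a mediant. -/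
lemma fareyDepth_mediant {a b c d : ℤ} (hb : 1 ≤ b) (hd : 1 ≤ d)
    (h : a * d - b * c = 1 ∨ a * d - b * c = -1) :
    fareyDepth (((a + c : ℤ) : ℚ) / ((b + d : ℤ) : ℚ))
      = 1 + min (fareyDepth ((a : ℚ) / b)) (fareyDepth ((c : ℚ) / d)) := by
  have hdet : (a + c) * d - (b + d) * c = 1 ∨ (a + c) * d - (b + d) * c = -1 := by
    rcases h with h | h
    · left; linear_combination h
    · right; linear_combination h
  obtain ⟨e1, e2⟩ := num_den_of_isCoprime (by omega : 0 < b + d) (isCoprime_of_det hdet)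
  generalize hx : ((a + c : ℤ) : ℚ) / ((b + d : ℤ) : ℚ) = x at *
  have hne : x.den ≠ 1 := by omega
  apply le_antisymm
  · exact fareyDepth_le (.step x _ _ _ _ hne ⟨a, b, c, d, hb, hd, e2.symm, e1.symm, h, rfl, rfl⟩
      (depthRel_fareyDepth _) (depthRel_fareyDepth _))
  · generalize hn : fareyDepth x = n
    have hr := depthRel_fareyDepth x
    rw [hn] at hr
    cases hr with
    | int _ h1 => exact absurd h1 hne
    | step _ u v m k _ hp hu hv =>
      obtain ⟨a', b', c', d', hb', hd', h1, h2, h3, rfl, rfl⟩ := hp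
      have hu' := fareyDepth_le hu
      have hv' := fareyDepth_le hv
      rcases fareyParents_unique hb hd hb' hd' (by omega) (by omega) h h3 with
        ⟨rfl, rfl⟩ | ⟨rfl, rfl⟩
      · obtain rfl : c = c' := by linarith
        obtain rfl : d = d' := by linarith
        omega
      · obtain rfl : c = a' := by linarith
        obtain rfl : d = b' := by linarith
        omega

/-- The depth is `1`-Lipschitz along the edges of the Farey graph. -/
lemma fareyDepth_le_of_pos {p q r s : ℤ} (hq : 1 ≤ q) (hs : 1 ≤ s)
    (h : p * s - q * r = 1 ∨ p * s - q * r = -1) :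
    fareyDepth ((p : ℚ) / q) ≤ fareyDepth ((r : ℚ) / s) + 1 := by
  induction hn : s.toNat using Nat.strong_induction_on generalizing r s with
  | _ N ih =>
    subst hn
    rcases lt_trichotomy q s with hqs | rfl | hqs
    · have hd : p * (s - q) - q * (r - p) = 1 ∨ p * (s - q) - q * (r - p) = -1 := by
        rcases h with h | h
        · left; linear_combination h
        · right; linear_combination h
      have h1 := fareyDepth_mediant hq (by omega) hd
      have h2 := ih (s - q).toNat (by omega) (by omega) hd rfl
      rw [show p + (r - p) = r by ring, show q + (s - q) = s by ring] at h1
      omega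
    · have h1 : IsUnit q := by
        rcases h with h | h
        · exact IsUnit.of_mul_eq_one (p - r) (by linear_combination h)
        · exact IsUnit.of_mul_eq_one (r - p) (by linear_combination -h)
      obtain rfl : q = 1 := by
        rcases Int.isUnit_iff.1 h1 with h1 | h1 <;> omega
      rw [fareyDepth_of_den_eq_one (by simp)]
      omega
    · have hd : r * (q - s) - s * (p - r) = 1 ∨ r * (q - s) - s * (p - r) = -1 := by
        rcases h with h | h
        · right; linear_combination -h
        · left; linear_combination -h
      have h1 := fareyDepth_mediant hs (by omega) hd
      rw [show r + (p - r) = p by ring, show s + (q - s) = q by ring] at h1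
      omega

lemma fareyDepth_le_of_ne {p q r s : ℤ} (hq : q ≠ 0) (hs : s ≠ 0)
    (h : p * s - q * r = 1 ∨ p * s - q * r = -1) :
    fareyDepth ((p : ℚ) / q) ≤ fareyDepth ((r : ℚ) / s) + 1 := by
  have eq : ∀ x y : ℤ, ((-x : ℤ) : ℚ) / ((-y : ℤ) : ℚ) = (x : ℚ) / y := by
    intro x y; push_cast; exact neg_div_neg_eq _ _
  rcases lt_or_gt_of_ne hq with hq | hq <;> rcases lt_or_gt_of_ne hs with hs | hs
  · rw [← eq p q, ← eq r s]
    exact fareyDepth_le_of_pos (by omega) (by omega) (by simpa using h)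
  · rw [← eq p q]
    refine fareyDepth_le_of_pos (by omega) (by omega) ?_
    rcases h with h | h
    · right; linear_combination -h
    · left; linear_combination -h
  · rw [← eq r s]
    refine fareyDepth_le_of_pos (by omega) (by omega) ?_
    rcases h with h | h
    · right; linear_combination -h
    · left; linear_combination -h
  · exact fareyDepth_le_of_pos (by omega) (by omega) h

lemma DepthRel.walk {x : ℚ} {n : ℕ} (h : DepthRel x n) :
    FareyWalk (n + 1) (x.num, (x.den : ℤ)) (1, 0) := by
  induction h with
  | int x h => exact .cons 0 _ (1, 0) _ (by simp [h]) (.nil _ _ (Or.inl rfl))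
  | step x u v m k h hp _ _ ihu ihv =>
    obtain ⟨a, b, c, d, hb, hd, h1, h2, h3, rfl, rfl⟩ := hp
    have e1 := num_den_of_isCoprime (by omega : 0 < b) (isCoprime_of_det h3)
    have h3' : c * b - d * a = 1 ∨ c * b - d * a = -1 := by
      rcases h3 with h | h
      · right; linear_combination -h
      · left; linear_combination -h
    have e2 := num_den_of_isCoprime (by omega : 0 < d) (isCoprime_of_det h3')
    rw [e1.1, e1.2] at ihu
    rw [e2.1, e2.2] at ihv
    rcases min_cases m k with ⟨e, _⟩ | ⟨e, _⟩ <;> rw [e, add_comm 1]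
    · refine .cons _ _ _ _ ?_ ihu
      rw [← h1, ← h2]
      rcases h3' with h | h
      · left; linear_combination h
      · right; linear_combination h
    · refine .cons _ _ _ _ ?_ ihv
      rw [← h1, ← h2]
      rcases h3 with h | h
      · left; linear_combination h
      · right; linear_combination h

lemma FareyWalk.depth_lt {k : ℕ} {u v : ℤ × ℤ} (h : FareyWalk k u v) (hv : v = (1, 0))
    (hu : u.2 ≠ 0) : fareyDepth ((u.1 : ℚ) / (u.2 : ℚ)) + 1 ≤ k := by
  induction h with
  | nil u v h =>
    exfalso
    subst hv
    rcases h with h | h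
    · exact hu (by rw [← h])
    · have := congrArg Prod.snd h
      simp at this
      exact hu this
  | cons k u w v h hw ih =>
    by_cases h0 : w.2 = 0
    · have h1 : IsUnit u.2 := by
        rw [h0] at h
        rcases h with h | h
        · exact IsUnit.of_mul_eq_one (-w.1) (by linear_combination h)
        · exact IsUnit.of_mul_eq_one w.1 (by linear_combination -h)
      have h2 : ((u.1 : ℚ) / (u.2 : ℚ)).den = 1 := by
        rcases Int.isUnit_iff.1 h1 with h1 | h1
        · simp [h1]
        · simp [h1, div_neg]
      rw [fareyDepth_of_den_eq_one h2]
      omega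
    · have := ih hv h0
      have := fareyDepth_le_of_ne hu h0 h
      omega

/-! ### Continued fractions and matrices -/

/-- The matrix of the Möbius transformation `z ↦ 1 / (a₁ + 1 / (a₂ + ⋯ + 1 / (aₙ + z)))`. Its second
column consists of numerator and denominator of `[a₁, …, aₙ]`. -/
def cfMat (l : List ℤ) : Matrix (Fin 2) (Fin 2) ℤ := (l.map fun x => !![0, 1; 1, x]).prod

lemma cfMat_append (l r : List ℤ) : cfMat (l ++ r) = cfMat l * cfMat r := by
  simp [cfMat]

lemma cfMat_cons (x : ℤ) (l : List ℤ) : cfMat (x :: l) = !![0, 1; 1, x] * cfMat l := by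
  simp [cfMat]

lemma cfMat_reverse (l : List ℤ) : cfMat l.reverse = (cfMat l).transpose := by
  rw [cfMat, cfMat, Matrix.transpose_list_prod, List.map_reverse, List.map_map]
  congr 2
  refine List.map_congr_left fun x _ => ?_
  ext i j
  fin_cases i <;> fin_cases j <;> rfl

lemma cfMat_det (l : List ℤ) :
    cfMat l 0 0 * cfMat l 1 1 - cfMat l 0 1 * cfMat l 1 0 = 1 ∨
      cfMat l 0 0 * cfMat l 1 1 - cfMat l 0 1 * cfMat l 1 0 = -1 := by
  induction l with
  | nil => simp [cfMat]
  | cons x l ih =>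
    simp only [cfMat_cons, Matrix.mul_apply, Fin.sum_univ_two]
    simp
    rcases ih with h | h
    · right; linear_combination -h
    · left; linear_combination -h

lemma cfMat_cons_zero_one (x : ℤ) (l : List ℤ) : cfMat (x :: l) 0 1 = cfMat l 1 1 := by
  simp [cfMat_cons, Matrix.mul_apply, Fin.sum_univ_two]

lemma cfMat_cons_one_one (x : ℤ) (l : List ℤ) :
    cfMat (x :: l) 1 1 = cfMat l 0 1 + x * cfMat l 1 1 := by
  simp [cfMat_cons, Matrix.mul_apply, Fin.sum_univ_two]

/-- Negating all entries conjugates the matrix by `diag(1, -1)`, up to sign. -/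
lemma cfMat_neg (l : List ℤ) : ∃ s : ℤ, (s = 1 ∨ s = -1) ∧
    cfMat (l.map fun x => -1 * x) 0 1 = -(s * cfMat l 0 1) ∧
    cfMat (l.map fun x => -1 * x) 1 1 = s * cfMat l 1 1 := by
  induction l with
  | nil => exact ⟨1, by simp [cfMat]⟩
  | cons x l ih =>
    obtain ⟨s, hs, h1, h2⟩ := ih
    refine ⟨-s, by omega, ?_, ?_⟩
    · rw [List.map_cons, cfMat_cons_zero_one, cfMat_cons_zero_one, h2]; ring
    · rw [List.map_cons, cfMat_cons_one_one, cfMat_cons_one_one, h1, h2]; ring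

/-- The value of `l` is the quotient `p / q` of the entries of the second column of `cfMat l`, with
`|p| < |q|` and with the sign of `x`. -/
def Reduced (x : ℤ) (l : List ℤ) : Prop :=
  cfVal l = (cfMat l 0 1 : ℚ) / (cfMat l 1 1 : ℚ) ∧ |cfMat l 0 1| < |cfMat l 1 1| ∧
    0 < x * (cfMat l 0 1 * cfMat l 1 1)

/-- The value of `l` is the quotient `p / q` of the entries of the second column of `cfMat l`, with
`q ≠ 0`, and either `|p| < |q|` or `p / q` has the sign of `x`. This guarantees that prepending `x`
yields a reduced list as soon as `2 ≤ |x|` (`Admits.cons`). -/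
def Admits (x : ℤ) (l : List ℤ) : Prop :=
  cfVal l = (cfMat l 0 1 : ℚ) / (cfMat l 1 1 : ℚ) ∧ cfMat l 1 1 ≠ 0 ∧
    (|cfMat l 0 1| < |cfMat l 1 1| ∨ 0 < x * (cfMat l 0 1 * cfMat l 1 1))

lemma Reduced.ne_zero {x : ℤ} {l : List ℤ} (h : Reduced x l) : cfMat l 1 1 ≠ 0 :=
  abs_pos.1 ((abs_nonneg _).trans_lt h.2.1)

lemma Reduced.admits {x : ℤ} {l : List ℤ} (h : Reduced x l) (y : ℤ) : Admits y l :=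
  ⟨h.1, h.ne_zero, Or.inl h.2.1⟩

lemma admits_nil (x : ℤ) : Admits x [] := by
  simp [Admits, cfVal, cfMat]

lemma cfVal_cons_eq {l : List ℤ} (x : ℤ)
    (h : cfVal l = (cfMat l 0 1 : ℚ) / (cfMat l 1 1 : ℚ)) (h0 : cfMat l 1 1 ≠ 0) :
    cfVal (x :: l) = (cfMat (x :: l) 0 1 : ℚ) / (cfMat (x :: l) 1 1 : ℚ) := by
  have h1 : (cfMat l 1 1 : ℚ) ≠ 0 := by exact_mod_cast h0
  have h2 : (x : ℚ) + cfMat l 0 1 / cfMat l 1 1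
      = ((cfMat l 0 1 + x * cfMat l 1 1 : ℤ) : ℚ) / cfMat l 1 1 := by
    push_cast; field_simp; ring
  rw [cfVal, h, h2, one_div_div, cfMat_cons_zero_one, cfMat_cons_one_one]

lemma Admits.cons {x : ℤ} {l : List ℤ} (h : Admits x l) (hx : 2 ≤ |x|) : Reduced x (x :: l) := by
  obtain ⟨h1, h2, h3⟩ := h
  refine ⟨cfVal_cons_eq x h1 h2, ?_⟩
  rw [cfMat_cons_zero_one, cfMat_cons_one_one]
  generalize cfMat l 0 1 = p at *
  generalize cfMat l 1 1 = q at *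
  have hq : 0 < q ^ 2 := by positivity
  have hx2 : 4 ≤ x ^ 2 := by nlinarith [sq_abs x]
  rcases h3 with h3 | h3
  · have h4 : |x * q| = |x| * |q| := abs_mul x q
    have h5 : 2 * |q| ≤ |x * q| := by rw [h4]; gcongr
    have h6 : |x * q| - |p| ≤ |p + x * q| := by
      have := abs_sub_abs_le_abs_sub (x * q) (-p)
      rw [abs_neg, sub_neg_eq_add, add_comm (x * q)] at this
      exact this
    have h7 : |p| < |x * q| := by have := abs_nonneg q; linarith
    have h8 : |(x * q) * p| < (x * q) ^ 2 := by
      rw [abs_mul, ← sq_abs (x * q), sq]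
      exact mul_lt_mul_of_pos_left h7 ((abs_nonneg _).trans_lt h7)
    have h9 := neg_abs_le ((x * q) * p)
    refine ⟨by linarith, ?_⟩
    nlinarith
  · refine ⟨sq_lt_sq.1 ?_, ?_⟩
    · nlinarith [sq_nonneg p]
    · nlinarith

/-- Between equal entries the connector `0` is permitted. -/
lemma Reduced.connector {x y c : ℤ} {l : List ℤ} (h : Reduced y l) (hc : c = 0 → x = y) :
    Admits x (2 * c :: l) := by
  by_cases h0 : c = 0
  · obtain rfl := hc h0
    subst h0
    refine ⟨cfVal_cons_eq _ h.1 h.ne_zero, ?_⟩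
    have := h.2.2
    rw [cfMat_cons_zero_one, cfMat_cons_one_one, mul_zero, zero_mul, add_zero]
    refine ⟨fun h => by simp [h] at this, Or.inr ?_⟩
    rwa [mul_comm (cfMat l 1 1)]
  · refine ((h.admits (2 * c)).cons ?_).admits x
    rw [abs_mul, abs_two]
    have := abs_pos.2 h0
    omega

lemma reduced_append {t r : List ℤ} (ht : ∀ y ∈ t, 2 ≤ |y|)
    (hr : ∀ x ∈ t.getLast?, Admits x r) : ∀ x ∈ t.head?, Reduced x (t ++ r) := by
  induction t with
  | nil => simp
  | cons x t ih =>
    simp only [List.head?_cons, Option.mem_def, Option.some.injEq, forall_eq', List.cons_append]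
    refine Admits.cons ?_ (ht x (by simp))
    cases t with
    | nil => exact hr x (by simp)
    | cons y t =>
      exact (ih (fun z hz => ht z (List.mem_cons_of_mem _ hz))
        (by simpa [List.getLast?_cons_cons] using hr) y (by simp)).admits x

/-! ### Tiles -/

lemma parseTile_ne_nil {a : List ℤ} (ha : a ≠ []) (ε : ℕ → ℤ) (i : ℕ) : parseTile a ε i ≠ [] := by
  unfold parseTile
  split_ifs <;> simpa using ha

lemma two_le_abs_of_mem_parseTile {a : List ℤ} (h : ∀ x ∈ a, 2 ≤ |x|) {ε : ℕ → ℤ} {i : ℕ}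
    (hε : ε i = 1 ∨ ε i = -1) : ∀ x ∈ parseTile a ε i, 2 ≤ |x| := by
  intro x hx
  obtain ⟨y, hy, rfl⟩ := List.mem_map.1 hx
  have hya : y ∈ a := by
    split_ifs at hy
    · exact hy
    · exact List.mem_reverse.1 hy
  rcases hε with e | e <;> simpa [e] using h y hya

/-- Consecutive tiles of equal sign are mirror images of each other. -/
lemma parseTile_getLast? (a : List ℤ) {ε : ℕ → ℤ} {i : ℕ} (hε : ε i = ε (i + 1)) :
    (parseTile a ε i).getLast? = (parseTile a ε (i + 1)).head? := by
  unfold parseTile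
  rcases Nat.mod_two_eq_zero_or_one i with h | h
  · have h' : (i + 1) % 2 = 1 := by omega
    simp [h, h', hε]
  · have h' : (i + 1) % 2 = 0 := by omega
    simp [h, h', hε]

lemma parseBuild_one (a : List ℤ) (ε c : ℕ → ℤ) : parseBuild a ε c 1 = parseTile a ε 1 := by
  simp [parseBuild]

lemma parseBuild_succ (a : List ℤ) (ε c : ℕ → ℤ) {n : ℕ} (hn : 1 ≤ n) :
    parseBuild a ε c (n + 1) = parseBuild a ε c n ++ (2 * c n) :: parseTile a ε (n + 1) := by
  rw [parseBuild, if_neg (by omega)]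

section
variable {a : List ℤ} {ε c : ℕ → ℤ} {n : ℕ}

/-- Compatibility of a connector with the entries next to it. -/
lemma connector_eq (hc : c n = 0 → ε n = ε (n + 1)) {x y : ℤ}
    (hx : x ∈ (parseTile a ε n).getLast?) (hy : y ∈ (parseTile a ε (n + 1)).head?) :
    c n = 0 → x = y := by
  intro h
  rw [parseTile_getLast? a (hc h)] at hx
  exact Option.mem_unique hx hy

lemma exists_mem_head? {t : List ℤ} (h : t ≠ []) : ∃ x, x ∈ t.head? :=
  ⟨_, List.head_mem_head? h⟩

lemma exists_mem_getLast? {t : List ℤ} (h : t ≠ []) : ∃ x, x ∈ t.getLast? :=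
  ⟨_, List.getLast_mem_getLast? h⟩

lemma parseBuild_reduced (ha : a ≠ []) (h : ∀ x ∈ a, 2 ≤ |x|) (hn : 1 ≤ n)
    (hε : ∀ i, 1 ≤ i → i ≤ n → ε i = 1 ∨ ε i = -1)
    (hc : ∀ i, 1 ≤ i → i ≤ n - 1 → c i = 0 → ε i = ε (i + 1)) (r : List ℤ)
    (hr : ∀ x ∈ (parseTile a ε n).getLast?, Admits x r) :
    ∀ x ∈ (parseTile a ε 1).head?, Reduced x (parseBuild a ε c n ++ r) := by
  induction n, hn using Nat.le_induction generalizing r with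
  | base =>
    rw [parseBuild_one]
    exact reduced_append (two_le_abs_of_mem_parseTile h (hε 1 le_rfl le_rfl)) hr
  | succ n hn ih =>
    rw [parseBuild_succ a ε c hn, List.append_assoc, List.cons_append]
    refine ih (fun i h1 h2 => hε i h1 (by omega)) (fun i h1 h2 => hc i h1 (by omega)) _ ?_
    intro x hx
    obtain ⟨y, hy⟩ := exists_mem_head? (parseTile_ne_nil ha ε (n + 1))
    exact (reduced_append (two_le_abs_of_mem_parseTile h (hε _ (by omega) le_rfl)) hr y hy).connector
      (connector_eq (hc n hn (by omega)) hx hy)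

lemma parseBuild_reverse_reduced (ha : a ≠ []) (h : ∀ x ∈ a, 2 ≤ |x|) (hn : 1 ≤ n)
    (hε : ∀ i, 1 ≤ i → i ≤ n → ε i = 1 ∨ ε i = -1)
    (hc : ∀ i, 1 ≤ i → i ≤ n - 1 → c i = 0 → ε i = ε (i + 1)) :
    ∀ x ∈ (parseTile a ε n).getLast?, Reduced x (parseBuild a ε c n).reverse := by
  induction n, hn using Nat.le_induction with
  | base =>
    rw [parseBuild_one, ← List.head?_reverse]
    have := reduced_append (t := (parseTile a ε 1).reverse) (r := [])
      (fun y hy => two_le_abs_of_mem_parseTile h (hε 1 le_rfl le_rfl) y (List.mem_reverse.1 hy))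
      (fun x _ => admits_nil x)
    simpa using this
  | succ n hn ih =>
    have ih := ih (fun i h1 h2 => hε i h1 (by omega)) (fun i h1 h2 => hc i h1 (by omega))
    rw [parseBuild_succ a ε c hn, List.reverse_append, List.reverse_cons, List.append_assoc,
      ← List.head?_reverse]
    refine reduced_append (fun y hy => two_le_abs_of_mem_parseTile h (hε (n + 1) (by omega) le_rfl) y
      (List.mem_reverse.1 hy)) ?_
    intro y hy
    rw [List.getLast?_reverse] at hy
    obtain ⟨x, hx⟩ := exists_mem_getLast? (parseTile_ne_nil ha ε n)
    exact (ih x hx).connector fun h0 => (connector_eq (hc n hn (by omega)) hx hy h0).symm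

/-- The distance from `∞` to the value of a tile is at least `d([a]) + 1`: changing signs and
reversing the list are realized by unimodular maps, the latter swapping the endpoints. -/
lemma tile_walk {i k : ℕ} (hε : ε i = 1 ∨ ε i = -1)
    (hv : cfVal a = (cfMat a 0 1 : ℚ) / (cfMat a 1 1 : ℚ)) (h0 : cfMat a 1 1 ≠ 0)
    (hw : FareyWalk k (1, 0) (cfMat (parseTile a ε i) 0 1, cfMat (parseTile a ε i) 1 1)) :
    fareyDepth (cfVal a) + 1 ≤ k := by
  suffices hs : FareyWalk k (1, 0) (cfMat a 0 1, cfMat a 1 1) by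
    rw [hv]
    exact hs.symm.depth_lt rfl h0
  obtain ⟨t, ht⟩ : ∃ t, t = if i % 2 = 1 then a else a.reverse := ⟨_, rfl⟩
  have h1 : FareyWalk k (1, 0) (cfMat t 0 1, cfMat t 1 1) := by
    rw [parseTile, ← ht] at hw
    rcases hε with e | e
    · simpa [e] using hw
    · obtain ⟨s, hs, e1, e2⟩ := cfMat_neg t
      rw [e, e1, e2] at hw
      refine hw.map' 1 0 0 (-1) (by simp) (by simp) ?_
      rcases hs with rfl | rfl
      · right; simp
      · left; simp
  split_ifs at ht
  · rwa [ht] at h1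
  · rw [ht, cfMat_reverse] at h1
    simp only [Matrix.transpose_apply] at h1
    have hd := cfMat_det a
    refine (h1.map' (cfMat a 0 1) (-cfMat a 0 0) (cfMat a 1 1) (-cfMat a 1 0) ?_ ?_ ?_
      (u' := (cfMat a 0 1, cfMat a 1 1)) (v' := (1, 0))).symm
    · rcases hd with hd | hd
      · left; linear_combination hd
      · right; linear_combination hd
    · left; simp
    · rcases hd with hd | hd
      · right
        ext
        · simp; linear_combination -hd
        · simp; ring
      · left
        ext
        · simp; linear_combination hd
        · simp; ring

/-- The distance from `∞` to the value of `n` tiles is at least `n (D - 2) + 2`, where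
`D = d([a]) + 1`. -/
lemma walk_bound (ha : a ≠ []) (h : ∀ x ∈ a, 2 ≤ |x|)
    (hv : cfVal a = (cfMat a 0 1 : ℚ) / (cfMat a 1 1 : ℚ)) (h0 : cfMat a 1 1 ≠ 0) (hn : 1 ≤ n)
    (hε : ∀ i, 1 ≤ i → i ≤ n → ε i = 1 ∨ ε i = -1)
    (hc : ∀ i, 1 ≤ i → i ≤ n - 1 → c i = 0 → ε i = ε (i + 1)) {k : ℕ}
    (hw : FareyWalk k (1, 0) (cfMat (parseBuild a ε c n) 0 1, cfMat (parseBuild a ε c n) 1 1)) :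
    (n : ℤ) * ((fareyDepth (cfVal a) : ℤ) - 1) + 2 ≤ k := by
  induction n, hn using Nat.le_induction generalizing k with
  | base =>
    rw [parseBuild_one] at hw
    have := tile_walk (hε 1 le_rfl le_rfl) hv h0 hw
    push_cast
    omega
  | succ n hn ih =>
    have hε' : ∀ i, 1 ≤ i → i ≤ n → ε i = 1 ∨ ε i = -1 := fun i h1 h2 => hε i h1 (by omega)
    have hc' : ∀ i, 1 ≤ i → i ≤ n - 1 → c i = 0 → ε i = ε (i + 1) :=
      fun i h1 h2 => hc i h1 (by omega)
    have hεn := hε (n + 1) (by omega) le_rfl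
    have ih := @ih hε' hc'
    have htile := @tile_walk a ε (n + 1) (hε := hεn) (hv := hv) (h0 := h0)
    obtain ⟨x, hx⟩ := exists_mem_getLast? (parseTile_ne_nil ha ε n)
    obtain ⟨y, hy⟩ := exists_mem_head? (parseTile_ne_nil ha ε (n + 1))
    have hxy := connector_eq (hc n hn (by omega)) hx hy
    obtain ⟨-, hl1, hl2⟩ := parseBuild_reverse_reduced ha h hn hε' hc' x hx
    obtain ⟨-, hr1, hr2⟩ := reduced_append (r := [])
      (two_le_abs_of_mem_parseTile h hεn) (fun x _ => admits_nil x) y hy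
    rw [List.append_nil] at hr1 hr2
    rw [cfMat_reverse] at hl1 hl2
    simp only [Matrix.transpose_apply] at hl1 hl2
    rw [parseBuild_succ a ε c hn, cfMat_append] at hw
    simp only [Matrix.mul_apply, Fin.sum_univ_two, cfMat_cons_zero_one, cfMat_cons_one_one] at hw
    have hd := cfMat_det (parseBuild a ε c n)
    generalize cfMat (parseBuild a ε c n) 0 0 = A at *
    generalize cfMat (parseBuild a ε c n) 0 1 = B at *
    generalize cfMat (parseBuild a ε c n) 1 0 = C at *
    generalize cfMat (parseBuild a ε c n) 1 1 = E at *
    generalize cfMat (parseTile a ε (n + 1)) 0 1 = p at *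
    generalize cfMat (parseTile a ε (n + 1)) 1 1 = q at *
    generalize c n = m at *
    -- the walk in coordinates for which the value of the first `n` tiles is `(0, 1)`
    have hw1 : FareyWalk k (E, -C) (q, p + 2 * m * q) := by
      refine hw.map' E (-B) (-C) A ?_ ?_ ?_
      · rcases hd with hd | hd
        · left; linear_combination hd
        · right; linear_combination hd
      · left; simp
      · rcases hd with hd | hd
        · left
          ext
          · linear_combination (-q) * hd
          · linear_combination (-(p + 2 * m * q)) * hd
        · right
          ext
          · simp only [Prod.fst_neg]; linear_combination q * hd
          · simp only [Prod.snd_neg]; linear_combination (p + 2 * m * q) * hd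
    have hCE : |C * E| < E ^ 2 := by
      rw [abs_mul, ← sq_abs E, sq]
      exact mul_lt_mul_of_pos_right hl1 ((abs_nonneg _).trans_lt hl1)
    have hpq : |p * q| < q ^ 2 := by
      rw [abs_mul, ← sq_abs q, sq]
      exact mul_lt_mul_of_pos_right hr1 ((abs_nonneg _).trans_lt hr1)
    rw [abs_lt] at hCE hpq
    -- in these coordinates `∞` has slope in `(-1, 1)`, and the other end has slope in
    -- `(2m - 1, 2m + 1)`; the edge towards slope `sign m` separates them
    obtain ⟨k₁, k₂, hk, hk1, hk2⟩ : ∃ k₁ k₂, k₁ + k₂ ≤ k + 2 ∧ FareyWalk k₁ (E, -C) (0, 1) ∧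
        FareyWalk k₂ (0, 1) (q, p + 2 * m * q) := by
      rcases lt_trichotomy m 0 with hm | rfl | hm
      · refine hw1.split (-1) (-1) ?_ ?_
        · simp only; nlinarith
        · simp only; nlinarith [mul_nonneg (sq_nonneg q) (by omega : 0 ≤ -1 - m)]
      · obtain rfl := hxy rfl
        refine hw1.split x 0 ?_ ?_
        · simp only; nlinarith
        · simp only; nlinarith
      · refine hw1.split 1 1 ?_ ?_
        · simp only; nlinarith
        · simp only; nlinarith [mul_nonneg (sq_nonneg q) (by omega : 0 ≤ m - 1)]
    have b1 := ih (k := k₁) <| by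
      refine hk1.map' A B C E (by rcases hd with hd | hd <;> simp [hd]) ?_ (by simp)
      rcases hd with hd | hd
      · left
        ext
        · simp; linear_combination -hd
        · simp; ring
      · right
        ext
        · simp; linear_combination hd
        · simp; ring
    have b2 := htile (k := k₂) <|
      hk2.map' (-(2 * m)) 1 1 0 (by simp) (by simp) (by left; ext <;> simp)
    push_cast
    rw [add_mul]
    omega

end

/-- If `a` is a nonempty list of even nonzero integers and `b` parses with respect to
`a` with `n ≥ 1` tiles, then `d([b]) ≥ n·d([a]) − (n − 1)`. -/
theorem stmt14 (a b : List ℤ) (ha : a ≠ []) (h : ∀ x ∈ a, Even x ∧ x ≠ 0)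
    (n : ℕ) (ε c : ℕ → ℤ) (hp : ParsesWith a b n ε c) :
    (n : ℤ) * (fareyDepth (cfVal a) : ℤ) - ((n : ℤ) - 1) ≤ (fareyDepth (cfVal b) : ℤ) := by
  obtain ⟨hn, hε, hc, rfl⟩ := hp
  have h2 : ∀ x ∈ a, 2 ≤ |x| := fun x hx =>
    Int.le_of_dvd (abs_pos.2 (h x hx).2) ((dvd_abs _ _).2 (h x hx).1.two_dvd)
  obtain ⟨y, hy⟩ := exists_mem_head? ha
  have hra := reduced_append (r := []) h2 (fun x _ => admits_nil x) y hy
  rw [List.append_nil] at hra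
  obtain ⟨z, hz⟩ := exists_mem_head? (parseTile_ne_nil ha ε 1)
  have hrb := parseBuild_reduced ha h2 hn hε hc [] (fun x _ => admits_nil x) z hz
  rw [List.append_nil] at hrb
  have hw := (depthRel_fareyDepth (cfVal (parseBuild a ε c n))).walk
  have hw' : FareyWalk (fareyDepth (cfVal (parseBuild a ε c n)) + 1) (1, 0)
      (cfMat (parseBuild a ε c n) 0 1, cfMat (parseBuild a ε c n) 1 1) := by
    have hd := cfMat_det (parseBuild a ε c n)
    have hne := hrb.ne_zero
    have hval := hrb.1
    generalize fareyDepth (cfVal (parseBuild a ε c n)) = d at *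
    rw [hval] at hw
    generalize cfMat (parseBuild a ε c n) 0 0 = A at *
    generalize cfMat (parseBuild a ε c n) 0 1 = B at *
    generalize cfMat (parseBuild a ε c n) 1 0 = C at *
    generalize cfMat (parseBuild a ε c n) 1 1 = E at *
    have hcop : IsCoprime B E := by
      rcases hd with hd | hd
      · exact ⟨-C, A, by linear_combination hd⟩
      · exact ⟨C, -A, by linear_combination -hd⟩
    rcases lt_or_gt_of_ne hne with hE | hE
    · have e := num_den_of_isCoprime (by omega : 0 < -E) hcop.neg_neg
      rw [show ((-B : ℤ) : ℚ) / ((-E : ℤ) : ℚ) = (B : ℚ) / E by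
        push_cast; exact neg_div_neg_eq _ _] at e
      rw [e.1, e.2] at hw
      simpa using hw.symm.neg_right
    · have e := num_den_of_isCoprime hE hcop
      rw [e.1, e.2] at hw
      exact hw.symm
  have := walk_bound ha h2 hra.1 hra.ne_zero hn hε hc hw'
  push_cast at this
  linarith
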